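/- arXiv:1409.6107 — 4 statements merged into one kernel-verified Lean document; each statement's English description precedes it below -/
import Mathlib

section
/- Let (X, 𝒜, μ) be a finite measure space, f : X → X a bijection such that both f and f⁻¹ are measurable, c ∈ [0,1) a constant, and C ∈ 𝒜 a measurable set such that for every measurable set S ⊆ C one has μ(f(S)) ≤ c·μ(S) and μ(f⁻¹(S)) ≤ c·μ(S). Then μ(C ∩ f(C)) = 0 and μ(C ∩ f⁻¹(C)) = 0. -/
open MeasureTheory

/-!
The argument works for a bimeasurable bijection `e : X → Y`, with `e` scaling the measure of subsets
of `C ⊆ X` by at most `a`, and `e⁻¹` that of subsets of `D ⊆ Y` by at most `b`, where `a * b < 1`.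
Pulling a measurable `T ⊆ D ∩ e(C)` back into `C` and pushing it forward again gives
`ν(T) ≤ a * b * ν(T)`, so `ν(T)` is `0` or `∞`; σ-finiteness of `ν` forces `ν(D ∩ e(C)) = 0`.
Finally, `e⁻¹` maps `D ∩ e(C)` onto `C ∩ e⁻¹(D)`, which is therefore null as well.
-/

open scoped ENNReal

section

variable {X Y : Type*} [MeasurableSpace X] [MeasurableSpace Y]
  {μ : Measure X} {ν : Measure Y} {a b : ℝ≥0∞}

theorem measure_eq_zero_of_forall_subset_le_mul [SigmaFinite μ] {s : Set X} (hs : MeasurableSet s)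
    (ha : a < 1) (h : ∀ t ⊆ s, MeasurableSet t → μ t ≤ a * μ t) : μ s = 0 := by
  by_contra hμs
  obtain ⟨t, ht, hts, ht_pos, ht_lt_top⟩ :=
    Measure.exists_subset_measure_lt_top hs (pos_iff_ne_zero.2 hμs)
  have mul_lt : a * μ t < μ t := by
    simpa only [one_mul] using ENNReal.mul_lt_mul_left ht_pos.ne' ht_lt_top.ne ha
  exact (h t hts ht).not_gt mul_lt

theorem symm_image_inter_image {α β : Type*} (e : α ≃ β) (s : Set α) (t : Set β) :
    e.symm '' (t ∩ e '' s) = s ∩ e.symm '' t := by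
  rw [Set.image_inter e.symm.injective, e.symm_image_image, Set.inter_comm]

theorem measure_le_mul_of_subset_inter_image (e : X ≃ᵐ Y) {C : Set X} {D T : Set Y}
    (hC : ∀ S ⊆ C, MeasurableSet S → ν (e '' S) ≤ a * μ S)
    (hD : ∀ S ⊆ D, MeasurableSet S → μ (e.symm '' S) ≤ b * ν S)
    (hT : MeasurableSet T) (hTD : T ⊆ D ∩ e '' C) : ν T ≤ a * b * ν T := by
  have pullback_subset : e.symm '' T ⊆ C :=
    (e.toEquiv.symm_image_subset C T).2 (hTD.trans Set.inter_subset_right)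
  calc
    ν T = ν (e '' (e.symm '' T)) := congrArg ν (e.toEquiv.image_symm_image T).symm
    _ ≤ a * μ (e.symm '' T) := hC _ pullback_subset (e.symm.measurableSet_image.2 hT)
    _ ≤ a * (b * ν T) := by gcongr; exact hD T (hTD.trans Set.inter_subset_left) hT
    _ = a * b * ν T := (mul_assoc a b (ν T)).symm

theorem measure_inter_image_eq_zero_of_contracting_general [SigmaFinite ν] (e : X ≃ᵐ Y)
    (hab : a * b < 1) {C : Set X} {D : Set Y} (hC : MeasurableSet C) (hD : MeasurableSet D)
    (hCe : ∀ S ⊆ C, MeasurableSet S → ν (e '' S) ≤ a * μ S)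
    (hDe : ∀ S ⊆ D, MeasurableSet S → μ (e.symm '' S) ≤ b * ν S) :
    ν (D ∩ e '' C) = 0 ∧ μ (C ∩ e.symm '' D) = 0 := by
  have inter_meas : MeasurableSet (D ∩ e '' C) := hD.inter (e.measurableSet_image.2 hC)
  have inter_null : ν (D ∩ e '' C) = 0 :=
    measure_eq_zero_of_forall_subset_le_mul inter_meas hab fun _ hTD hT ↦
      measure_le_mul_of_subset_inter_image e hCe hDe hT hTD
  refine ⟨inter_null, le_zero_iff.1 ?_⟩
  calc
    μ (C ∩ e.symm '' D) = μ (e.symm '' (D ∩ e '' C)) :=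
      congrArg μ (symm_image_inter_image e.toEquiv C D).symm
    _ ≤ b * ν (D ∩ e '' C) := hDe _ Set.inter_subset_left inter_meas
    _ = 0 := by rw [inter_null, mul_zero]

end

/-- If `f` is a bimeasurable bijection of a finite measure space,
`c ∈ [0,1)`, and `C` is a measurable set such that every measurable `S ⊆ C` satisfies
`μ(f(S)) ≤ c·μ(S)` and `μ(f⁻¹(S)) ≤ c·μ(S)`, then `μ(C ∩ f(C)) = 0` and
`μ(C ∩ f⁻¹(C)) = 0`. -/
theorem measure_inter_image_eq_zero_of_contracting
    (X : Type*) [MeasurableSpace X] (μ : Measure X) [IsFiniteMeasure μ]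
    (f : X ≃ X) (hf : Measurable f) (hf' : Measurable f.symm)
    (c : ℝ) (hc0 : 0 ≤ c) (hc1 : c < 1)
    (C : Set X) (hC : MeasurableSet C)
    (h : ∀ S : Set X, S ⊆ C → MeasurableSet S →
      μ (f '' S) ≤ ENNReal.ofReal c * μ S ∧ μ (f.symm '' S) ≤ ENNReal.ofReal c * μ S) :
    μ (C ∩ f '' C) = 0 ∧ μ (C ∩ f.symm '' C) = 0 :=
  have hc : ENNReal.ofReal c < 1 := ENNReal.ofReal_lt_one.2 hc1
  measure_inter_image_eq_zero_of_contracting_general ⟨f, hf, hf'⟩ (mul_lt_one' hc hc) hC hC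
    (fun S hSC hS ↦ (h S hSC hS).1) (fun S hSC hS ↦ (h S hSC hS).2)
end

section
/- Let f : ℝ^d → ℝ^d be a bijection such that both f and f⁻¹ are continuously differentiable, let n ≥ 1 be an integer, a > 0, and let C ⊆ ℝ^d be a Borel set of finite Lebesgue measure such that |det D(f^n)(x)| ≤ e^{−n·a} and |det D(f^{−n})(x)| ≤ e^{−n·a} for every x ∈ C, where f^n and f^{−n} denote the n-th iterates of f and f⁻¹ and D denotes the Fréchet derivative. Then Leb(C ∩ f^n(C)) = 0 and Leb(C ∩ f^{−n}(C)) = 0. -/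
open MeasureTheory

/-!
By the chain rule, the Jacobian determinants of `f^n` at `x` and of `f^{-n}` at `f^n x` are inverse
to each other, so they cannot both be smaller than `1` in absolute value. Hence no point of `C` is
mapped into `C` by `f^n` or `f^{-n}`, and the two intersections are not only null but empty.
-/

section InverseJacobian

variable {𝕜 E : Type*} [NontriviallyNormedField 𝕜] [NormedAddCommGroup E] [NormedSpace 𝕜 E]

theorem det_fderiv_mul_det_fderiv_of_leftInverse {g h : E → E} {x : E}
    (hhg : Function.LeftInverse h g) (hh : DifferentiableAt 𝕜 h (g x))
    (hg : DifferentiableAt 𝕜 g x) :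
    (fderiv 𝕜 h (g x)).det * (fderiv 𝕜 g x).det = 1 := by
  have chain_rule : (fderiv 𝕜 h (g x)).comp (fderiv 𝕜 g x) = .id 𝕜 E := by
    rw [← fderiv_comp x hh hg, hhg.comp_eq_id, fderiv_id]
  calc (fderiv 𝕜 h (g x)).det * (fderiv 𝕜 g x).det
      = ((fderiv 𝕜 h (g x)).comp (fderiv 𝕜 g x)).det := (LinearMap.det_comp _ _).symm
    _ = 1 := by rw [chain_rule]; exact LinearMap.det_id

theorem disjoint_image_of_norm_det_fderiv_lt_one {g h : E → E} {s t : Set E}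
    (hhg : Function.LeftInverse h g)
    (hg : ∀ x ∈ s, DifferentiableAt 𝕜 g x) (hh : ∀ y ∈ t, DifferentiableAt 𝕜 h y)
    (hs : ∀ x ∈ s, ‖(fderiv 𝕜 g x).det‖ < 1) (ht : ∀ y ∈ t, ‖(fderiv 𝕜 h y).det‖ < 1) :
    Disjoint t (g '' s) := by
  rw [Set.disjoint_right]
  rintro _ ⟨x, hxs, rfl⟩ hgxt
  have norm_mul_eq_one : ‖(fderiv 𝕜 h (g x)).det‖ * ‖(fderiv 𝕜 g x).det‖ = 1 := by
    rw [← norm_mul, det_fderiv_mul_det_fderiv_of_leftInverse hhg (hh _ hgxt) (hg x hxs), norm_one]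
  exact (mul_lt_one_of_nonneg_of_lt_one_left (norm_nonneg _) (ht _ hgxt) (hs x hxs).le).ne
    norm_mul_eq_one

theorem lebesgue_inter_iterate_eq_zero_of_small_jacobian_general [FiniteDimensional 𝕜 E]
    (f : E ≃ E) (hf : Differentiable 𝕜 f) (hf' : Differentiable 𝕜 f.symm) (n : ℕ) (C : Set E)
    (hdet : ∀ x ∈ C, ‖(fderiv 𝕜 f^[n] x).det‖ < 1 ∧ ‖(fderiv 𝕜 f.symm^[n] x).det‖ < 1) :
    Disjoint C (f^[n] '' C) ∧ Disjoint C (f.symm^[n] '' C) :=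
  ⟨disjoint_image_of_norm_det_fderiv_lt_one (f.left_inv.iterate n)
      (fun x _ ↦ hf.iterate n x) (fun x _ ↦ hf'.iterate n x)
      (fun x hx ↦ (hdet x hx).1) (fun x hx ↦ (hdet x hx).2),
    disjoint_image_of_norm_det_fderiv_lt_one (f.right_inv.iterate n)
      (fun x _ ↦ hf'.iterate n x) (fun x _ ↦ hf.iterate n x)
      (fun x hx ↦ (hdet x hx).2) (fun x hx ↦ (hdet x hx).1)⟩

end InverseJacobian

/-- Let `f : ℝ^d → ℝ^d` be a bijection with `f` and `f⁻¹` continuously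
differentiable, `n ≥ 1`, `a > 0`, and let `C` be a Borel set of finite Lebesgue measure on
which `|det D(f^n)| ≤ e^{-n·a}` and `|det D(f^{-n})| ≤ e^{-n·a}`.  Then
`Leb(C ∩ f^n(C)) = 0` and `Leb(C ∩ f^{-n}(C)) = 0`. -/
theorem lebesgue_inter_iterate_eq_zero_of_small_jacobian
    (d : ℕ) (hd : 1 ≤ d)
    (f : EuclideanSpace ℝ (Fin d) ≃ EuclideanSpace ℝ (Fin d))
    (hf : ContDiff ℝ 1 f) (hf' : ContDiff ℝ 1 f.symm)
    (n : ℕ) (hn : 1 ≤ n) (a : ℝ) (ha : 0 < a)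
    (C : Set (EuclideanSpace ℝ (Fin d))) (hC : MeasurableSet C)
    (hCfin : volume C < ⊤)
    (hdet : ∀ x ∈ C,
      |((fderiv ℝ ((⇑f)^[n]) x : EuclideanSpace ℝ (Fin d) →ₗ[ℝ]
          EuclideanSpace ℝ (Fin d)).det)| ≤ Real.exp (-(n : ℝ) * a) ∧
      |((fderiv ℝ ((⇑f.symm)^[n]) x : EuclideanSpace ℝ (Fin d) →ₗ[ℝ]
          EuclideanSpace ℝ (Fin d)).det)| ≤ Real.exp (-(n : ℝ) * a)) :
    volume (C ∩ (⇑f)^[n] '' C) = 0 ∧ volume (C ∩ (⇑f.symm)^[n] '' C) = 0 := by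
  have exp_lt_one : Real.exp (-(n : ℝ) * a) < 1 :=
    Real.exp_lt_one_iff.mpr (mul_neg_of_neg_of_pos (by simpa using Nat.succ_le_iff.mp hn) ha)
  have ⟨disjoint_forward, disjoint_backward⟩ :=
    lebesgue_inter_iterate_eq_zero_of_small_jacobian_general f (hf.differentiable one_ne_zero)
      (hf'.differentiable one_ne_zero) n C fun x hx ↦
        ⟨(hdet x hx).1.trans_lt exp_lt_one, (hdet x hx).2.trans_lt exp_lt_one⟩
  simp only [disjoint_forward.inter_eq, disjoint_backward.inter_eq, measure_empty, and_self]
end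

section
/- Let X be a measurable space, f : X → X a bijection such that both f and f⁻¹ are measurable, and let λ and μ be probability measures on X with μ absolutely continuous with respect to λ and μ f-invariant (μ(f⁻¹(S)) = μ(S) for every measurable S). Let B := {x ∈ X : (dμ/dλ)(x) > 0}, where dμ/dλ is the Radon–Nikodym derivative. Then λ(B) > 0, and every measurable set A with λ(A) > 1 − λ(B) satisfies: for every N ∈ ℕ there exists n ≥ N with μ(A ∩ f^{−n}(A)) > 0; in particular f^n(A) ∩ A ≠ ∅ for arbitrarily large n. (That is, λ is λ(B)-recurrent under f.) -/
open MeasureTheory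

/-!
The singular part of `μ` only adds mass, so `μ` charges every set that meets `B = {dμ/dλ > 0}` in
positive `λ`-measure. A set `A` with `λ(A) > λ(X) - λ(B)` is too large to miss `B`, hence
`μ(A) > 0`, and Poincaré recurrence for `μ` brings `A` back to itself at arbitrarily large times.
-/

section

variable {X : Type*} [MeasurableSpace X] {μ ν : Measure X} {s t : Set X} {f : X → X}

theorem measure_inter_pos_of_measure_univ_sub_lt [IsFiniteMeasure ν] (ht : MeasurableSet t)
    (h : ν Set.univ - ν t < ν s) : 0 < ν (s ∩ t) := by
  have hdiff : ν (s \ t) < ν s :=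
    calc ν (s \ t) ≤ ν tᶜ := measure_mono (Set.sdiff_subset_compl s t)
      _ = ν Set.univ - ν t := measure_compl ht (measure_ne_top ν t)
      _ < ν s := h
  by_contra! hnull
  exact hdiff.ne (measure_sdiff_null' (nonpos_iff_eq_zero.mp hnull))

theorem not_mutuallySingular_of_absolutelyContinuous [NeZero μ] (h : μ ≪ ν) : ¬ μ ⟂ₘ ν :=
  fun hsing ↦ NeZero.ne μ
    (Measure.eq_zero_of_absolutelyContinuous_of_mutuallySingular h hsing)

theorem measurableSet_rnDeriv_pos (μ ν : Measure X) :
    MeasurableSet {x | 0 < μ.rnDeriv ν x} :=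
  measurableSet_lt measurable_const (Measure.measurable_rnDeriv μ ν)

theorem measure_rnDeriv_pos_pos_iff [μ.HaveLebesgueDecomposition ν] :
    0 < ν {x | 0 < μ.rnDeriv ν x} ↔ ¬ μ ⟂ₘ ν := by
  rw [← Measure.rnDeriv_eq_zero, Filter.EventuallyEq, ae_iff, pos_iff_ne_zero]
  simp only [pos_iff_ne_zero, Pi.zero_apply, ne_eq]

theorem measure_pos_of_measure_inter_rnDeriv_pos
    (h : 0 < ν (s ∩ {x | 0 < μ.rnDeriv ν x})) : 0 < μ s := by
  have hdensity : ν.withDensity (μ.rnDeriv ν) s ≠ 0 := by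
    rw [Ne, withDensity_apply_eq_zero (Measure.measurable_rnDeriv μ ν), Set.inter_comm]
    simpa only [pos_iff_ne_zero] using h
  exact hdensity.bot_lt.trans_le (Measure.withDensity_rnDeriv_le μ ν s)

theorem exists_ge_measure_inter_preimage_iterate_pos (hf : Conservative f μ)
    (hs : NullMeasurableSet s μ) (hpos : 0 < μ s) (N : ℕ) :
    ∃ n, N ≤ n ∧ 0 < μ (s ∩ f^[n] ⁻¹' s) ∧ (f^[n] '' s ∩ s).Nonempty := by
  obtain ⟨n, hn, hreturn⟩ := hf.exists_gt_measure_inter_ne_zero hs hpos.ne' N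
  exact ⟨n, hn.le, hreturn.bot_lt,
    Set.image_inter_nonempty_iff.mpr (nonempty_of_measure_ne_zero hreturn)⟩

theorem deltaRecurrent_of_abs_cont_invariant_general [IsFiniteMeasure ν]
    [μ.HaveLebesgueDecomposition ν] (hf : Conservative f μ) (hsing : ¬ μ ⟂ₘ ν) :
    0 < ν {x | 0 < μ.rnDeriv ν x} ∧
      ∀ A : Set X, NullMeasurableSet A μ → ν Set.univ - ν {x | 0 < μ.rnDeriv ν x} < ν A →
        ∀ N : ℕ, ∃ n : ℕ, N ≤ n ∧ 0 < μ (A ∩ f^[n] ⁻¹' A) ∧ (f^[n] '' A ∩ A).Nonempty := by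
  refine ⟨measure_rnDeriv_pos_pos_iff.mpr hsing, fun A hA hlt ↦ ?_⟩
  have hinter : 0 < ν (A ∩ {x | 0 < μ.rnDeriv ν x}) :=
    measure_inter_pos_of_measure_univ_sub_lt (measurableSet_rnDeriv_pos μ ν) hlt
  exact exists_ge_measure_inter_preimage_iterate_pos hf hA
    (measure_pos_of_measure_inter_rnDeriv_pos hinter)

end

/-- If `μ ≪ λ` are probability measures with `μ` invariant under a
bimeasurable bijection `f`, and `B` is the set where the Radon–Nikodym derivative `dμ/dλ`
is positive, then `λ(B) > 0` and every measurable set `A` with `λ(A) > 1 - λ(B)` returns: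
for every `N` there is `n ≥ N` with `μ(A ∩ f^{-n}(A)) > 0`, and in particular
`f^n(A) ∩ A ≠ ∅`; that is, `λ` is `λ(B)`-recurrent under `f`. -/
theorem deltaRecurrent_of_abs_cont_invariant
    (X : Type*) [MeasurableSpace X]
    (f : X ≃ X) (hf : Measurable f) (hf' : Measurable f.symm)
    (lam μ : Measure X) [IsProbabilityMeasure lam] [IsProbabilityMeasure μ]
    (hac : μ ≪ lam)
    (hinv : ∀ S : Set X, MeasurableSet S → μ (⇑f ⁻¹' S) = μ S)
    (B : Set X) (hB : B = {x : X | 0 < μ.rnDeriv lam x}) :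
    0 < lam B ∧
      ∀ A : Set X, MeasurableSet A → 1 - lam B < lam A →
        ∀ N : ℕ, ∃ n : ℕ, N ≤ n ∧
          0 < μ (A ∩ (⇑f)^[n] ⁻¹' A) ∧ ((⇑f)^[n] '' A ∩ A).Nonempty := by
  subst hB
  have hpres : MeasurePreserving f μ μ :=
    ⟨hf, Measure.ext fun S hS ↦ (Measure.map_apply hf hS).trans (hinv S hS)⟩
  have hrec := deltaRecurrent_of_abs_cont_invariant_general hpres.conservative
    (not_mutuallySingular_of_absolutelyContinuous hac)
  exact ⟨hrec.1, fun A hA hlt ↦ hrec.2 A hA.nullMeasurableSet (by rwa [measure_univ])⟩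
end

section
/- Let V be a finite-dimensional real normed vector space, E and F linear subspaces with E ∩ F = {0}, E + F = V, dim E = d_E ≥ 1 and dim F = d_F ≥ 1, and let A : V → V be a linear automorphism with A(E) = E and A(F) = F. Suppose σ > 1 satisfies σ·‖A u‖·‖w‖ ≤ ‖A w‖·‖u‖ for all u ∈ E, w ∈ F. Then |det(A|_E)|^{d_F} ≤ σ^{−d_E·d_F}·|det(A|_F)|^{d_E}, where A|_E and A|_F denote the restricted linear endomorphisms of E and of F. -/
/-!
An endomorphism `f` of a `d`-dimensional normed space maps the unit ball into the ball of radius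
`‖f‖`, so comparing Haar volumes gives `|det f| ≤ ‖f‖ ^ d`. Applied to the inverse, this bounds
`|det f|` from below by the `d`-th power of any `c` with `c * ‖u‖ ≤ ‖f u‖` for all `u`. Domination
says exactly that `c = σ * ‖A|_E‖` is such a constant for `A|_F`.
-/

open MeasureTheory Metric Module

theorem mul_opNorm_le_of_forall_mul_norm_le {𝕜 E F : Type*} [NontriviallyNormedField 𝕜]
    [SeminormedAddCommGroup E] [NormedSpace 𝕜 E] [SeminormedAddCommGroup F] [NormedSpace 𝕜 F]
    (f : E →L[𝕜] F) {c M : ℝ} (hc : 0 ≤ c) (hM : 0 ≤ M) (h : ∀ u, c * ‖f u‖ ≤ M * ‖u‖) :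
    c * ‖f‖ ≤ M := by
  rcases hc.eq_or_lt with rfl | hc
  · rwa [zero_mul]
  rw [← le_div_iff₀' hc]
  refine f.opNorm_le_bound (by positivity) fun u ↦ ?_
  rw [div_mul_eq_mul_div, le_div_iff₀' hc]
  exact h u

section Determinant

variable {E : Type*} [NormedAddCommGroup E] [NormedSpace ℝ E] [FiniteDimensional ℝ E]

theorem abs_det_le_opNorm_pow_finrank (f : E →L[ℝ] E) : |f.det| ≤ ‖f‖ ^ finrank ℝ E := by
  borelize E
  let μ : Measure E := Measure.addHaar
  have image_subset : f '' closedBall 0 1 ⊆ closedBall 0 ‖f‖ := by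
    rintro _ ⟨u, hu, rfl⟩
    rw [mem_closedBall_zero_iff] at hu ⊢
    exact f.unit_le_opNorm u hu
  have volume_le : ENNReal.ofReal |f.det| * μ (closedBall 0 1) ≤
      ENNReal.ofReal (‖f‖ ^ finrank ℝ E) * μ (closedBall 0 1) := by
    rw [← Measure.addHaar_image_continuousLinearMap,
      ← Measure.addHaar_closedBall' μ 0 (norm_nonneg f)]
    exact measure_mono image_subset
  rwa [ENNReal.mul_le_mul_iff_left (measure_closedBall_pos μ 0 one_pos).ne'
    measure_closedBall_lt_top.ne, ENNReal.ofReal_le_ofReal_iff (by positivity)] at volume_le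

theorem pow_finrank_le_abs_det_of_pos (f : E →ₗ[ℝ] E) {c : ℝ} (hc : 0 < c)
    (h : ∀ u, c * ‖u‖ ≤ ‖f u‖) : c ^ finrank ℝ E ≤ |LinearMap.det f| := by
  have f_injective : Function.Injective f := by
    refine (injective_iff_map_eq_zero f).2 fun u hu ↦ norm_le_zero_iff.1 ?_
    have := h u
    rw [hu, norm_zero] at this
    exact nonpos_of_mul_nonpos_right this hc
  let e : E ≃ₗ[ℝ] E := LinearEquiv.ofInjectiveEndo f f_injective
  let inv : E →L[ℝ] E := e.symm.toLinearMap.toContinuousLinearMap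
  have norm_inv_le : ‖inv‖ ≤ c⁻¹ := by
    refine inv.opNorm_le_bound (by positivity) fun v ↦ ?_
    rw [← div_eq_inv_mul, le_div_iff₀' hc]
    calc c * ‖e.symm v‖ ≤ ‖e (e.symm v)‖ := h (e.symm v)
      _ = ‖v‖ := by rw [e.apply_symm_apply]
  have det_inv : inv.det = (LinearMap.det f)⁻¹ := eq_inv_of_mul_eq_one_right e.det_mul_det_symm
  have det_ne_zero : LinearMap.det f ≠ 0 := e.isUnit_det'.ne_zero
  refine (inv_le_inv₀ (abs_pos.2 det_ne_zero) (by positivity)).1 ?_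
  calc |LinearMap.det f|⁻¹ = |inv.det| := by rw [det_inv, abs_inv]
    _ ≤ ‖inv‖ ^ finrank ℝ E := abs_det_le_opNorm_pow_finrank inv
    _ ≤ c⁻¹ ^ finrank ℝ E := by gcongr
    _ = (c ^ finrank ℝ E)⁻¹ := inv_pow c _

theorem pow_finrank_le_abs_det (f : E →ₗ[ℝ] E) {c : ℝ} (hc : 0 ≤ c)
    (h : ∀ u, c * ‖u‖ ≤ ‖f u‖) : c ^ finrank ℝ E ≤ |LinearMap.det f| := by
  rcases hc.eq_or_lt with rfl | hc
  · rcases eq_or_ne (finrank ℝ E) 0 with finrank_eq | finrank_ne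
    · rw [finrank_eq, LinearMap.det_eq_one_of_finrank_eq_zero finrank_eq, pow_zero, abs_one]
    · rw [zero_pow finrank_ne]
      exact abs_nonneg _
  · exact pow_finrank_le_abs_det_of_pos f hc h

end Determinant

theorem det_restrict_dominated_general
    {E F : Type*} [NormedAddCommGroup E] [NormedSpace ℝ E] [FiniteDimensional ℝ E]
    [NormedAddCommGroup F] [NormedSpace ℝ F] [FiniteDimensional ℝ F]
    (f : E →ₗ[ℝ] E) (g : F →ₗ[ℝ] F) {σ : ℝ} (hσ : 0 < σ)
    (hdom : ∀ u w, σ * ‖f u‖ * ‖w‖ ≤ ‖g w‖ * ‖u‖) :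
    |LinearMap.det f| ^ finrank ℝ F ≤
      σ ^ (-((finrank ℝ E * finrank ℝ F : ℕ) : ℤ)) * |LinearMap.det g| ^ finrank ℝ E := by
  let T : E →L[ℝ] E := f.toContinuousLinearMap
  have conorm_ge (w : F) : σ * ‖T‖ * ‖w‖ ≤ ‖g w‖ := by
    rw [mul_right_comm]
    refine mul_opNorm_le_of_forall_mul_norm_le T (by positivity) (norm_nonneg _) fun u ↦ ?_
    rw [mul_right_comm]
    exact hdom u w
  have det_f_le : |LinearMap.det f| ≤ ‖T‖ ^ finrank ℝ E := abs_det_le_opNorm_pow_finrank T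
  have le_det_g : (σ * ‖T‖) ^ finrank ℝ F ≤ |LinearMap.det g| :=
    pow_finrank_le_abs_det g (by positivity) conorm_ge
  rw [zpow_neg, zpow_natCast, le_inv_mul_iff₀ (by positivity)]
  calc σ ^ (finrank ℝ E * finrank ℝ F) * |LinearMap.det f| ^ finrank ℝ F
      ≤ σ ^ (finrank ℝ E * finrank ℝ F) * (‖T‖ ^ finrank ℝ E) ^ finrank ℝ F := by gcongr
    _ = ((σ * ‖T‖) ^ finrank ℝ F) ^ finrank ℝ E := by ring
    _ ≤ |LinearMap.det g| ^ finrank ℝ E := by gcongr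

/-- If `V = E ⊕ F` with `dim E = dE ≥ 1`, `dim F = dF ≥ 1`, and
`A : V ≃ V` is a linear automorphism preserving `E` and `F` that satisfies the `σ`-domination
inequality (`σ > 1`), then `|det(A|_E)|^{dF} ≤ σ^{-dE·dF} · |det(A|_F)|^{dE}`. -/
theorem det_restrict_dominated
    (V : Type*) [NormedAddCommGroup V] [NormedSpace ℝ V] [FiniteDimensional ℝ V]
    (E F : Submodule ℝ V)
    (hEF_inf : E ⊓ F = ⊥) (hEF_sup : E ⊔ F = ⊤)
    (dE dF : ℕ) (hdE : Module.finrank ℝ E = dE) (hdF : Module.finrank ℝ F = dF)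
    (hdE1 : 1 ≤ dE) (hdF1 : 1 ≤ dF)
    (A : V ≃ₗ[ℝ] V)
    (hAE : ∀ v ∈ E, A v ∈ E) (hAE' : E.map (A : V →ₗ[ℝ] V) = E)
    (hAF : ∀ v ∈ F, A v ∈ F) (hAF' : F.map (A : V →ₗ[ℝ] V) = F)
    (σ : ℝ) (hσ : 1 < σ)
    (hdom : ∀ u ∈ E, ∀ w ∈ F, σ * ‖A u‖ * ‖w‖ ≤ ‖A w‖ * ‖u‖) :
    |LinearMap.det ((A : V →ₗ[ℝ] V).restrict hAE)| ^ dF ≤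
      σ ^ (-((dE * dF : ℕ) : ℤ)) * |LinearMap.det ((A : V →ₗ[ℝ] V).restrict hAF)| ^ dE := by
  subst hdE hdF
  exact det_restrict_dominated_general _ _ (one_pos.trans hσ) fun u w ↦ hdom u u.2 w w.2
end
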